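/- arXiv:1906.00020 — 5 statements merged into one kernel-verified Lean document; each statement's English description precedes it below -/
import Mathlib

section
/- Let m > 0 have k-sandwiching sequence (A_{a_i} b_i)_{i=1}^n with sandwiching values (m_i)_{i=0}^n. Then: (1) for every i with 0 ≤ i < n, m_i ≤ b_{i+1} < m_{i+1}; (2) for every i with 0 < i < n, a_i > a_{i+1}. -/
/-- The base-`k` Ackermann function `A_a(k, b)`:
`A_0(k, b) = k ^ b` and `A_{a+1}(k, b) = A_a^k(k, A_{a+1}(k, b-1))`,
with the auxiliary value `A_{a+1}(k, -1) = 1`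
(equivalently, `A_{a+1}(k, b) = (A_a^k)^[b+1] (1)`). -/
def Ack (k : ℕ) : ℕ → ℕ → ℕ
  | 0, b => k ^ b
  | a + 1, b => ((Ack k a)^[k])^[b + 1] 1

/-- `IsSandwich k m n a b ms` says that `(A_{a i}(k, b i))_{i=1}^n` is a
`k`-sandwiching sequence for `m`, with sandwiching values `(ms i)_{i=0}^n`:
`ms 0 = 0`; for each `i < n`, `A_{a (i+1)} (ms i) ≤ m < A_{a (i+1) + 1} (ms i)`,
`A_{a (i+1)} (b (i+1)) ≤ m < A_{a (i+1)} (b (i+1) + 1)`, and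
`ms (i+1) = A_{a (i+1)} (b (i+1))`; and `A_0 (ms n) > m`. -/
structure IsSandwich (k m n : ℕ) (a b ms : ℕ → ℕ) : Prop where
  ms_zero : ms 0 = 0
  idx_lo : ∀ i < n, Ack k (a (i + 1)) (ms i) ≤ m
  idx_hi : ∀ i < n, m < Ack k (a (i + 1) + 1) (ms i)
  arg_lo : ∀ i < n, Ack k (a (i + 1)) (b (i + 1)) ≤ m
  arg_hi : ∀ i < n, m < Ack k (a (i + 1)) (b (i + 1) + 1)
  ms_succ : ∀ i < n, ms (i + 1) = Ack k (a (i + 1)) (b (i + 1))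
  halt : m < Ack k 0 (ms n)

theorem iter_ge (f : ℕ → ℕ) (hf : ∀ x, x < f x) (j : ℕ) : j + 1 ≤ f^[j] 1 := by
  induction j with
  | zero => simp
  | succ j ih =>
    rw [Function.iterate_succ_apply']
    have := hf (f^[j] 1)
    omega

theorem iter_mono (f : ℕ → ℕ) (hf : ∀ x, x < f x) : StrictMono (fun j => f^[j] 1) := by
  apply strictMono_nat_of_lt_succ
  intro j
  show f^[j] 1 < f^[j+1] 1
  rw [Function.iterate_succ_apply']
  exact hf _

theorem Ack_succ (k a b : ℕ) : Ack k (a + 1) b = (Ack k a)^[k * (b + 1)] 1 := by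
  rw [Function.iterate_mul, Ack]

theorem Ack_props (k : ℕ) (hk : 2 ≤ k) (a : ℕ) :
    StrictMono (Ack k a) ∧ ∀ x, x < Ack k a x := by
  induction a with
  | zero =>
    constructor
    · intro x y h
      simp only [Ack]
      exact Nat.pow_lt_pow_right (by omega) h
    · intro x
      simp only [Ack]
      exact Nat.lt_pow_self (by omega)
  | succ a ih =>
    constructor
    · intro x y h
      rw [Ack_succ, Ack_succ]
      exact iter_mono _ ih.2 (Nat.mul_lt_mul_of_pos_left (by omega) (by omega))
    · intro x
      rw [Ack_succ]
      have := iter_ge _ ih.2 (k * (x + 1))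
      nlinarith

theorem Ack_le_succ (k : ℕ) (hk : 2 ≤ k) (a x : ℕ) : Ack k a x ≤ Ack k (a + 1) x := by
  obtain ⟨h1, h2⟩ := Ack_props k hk a
  rw [Ack_succ]
  obtain ⟨j, hj⟩ : ∃ j, k * (x + 1) = j + 1 := ⟨k * (x + 1) - 1, by
    have : 0 < k * (x + 1) := by positivity
    omega⟩
  rw [hj, Function.iterate_succ_apply']
  apply h1.monotone
  have := iter_ge _ h2 j
  nlinarith

theorem Ack_mono_idx (k : ℕ) (hk : 2 ≤ k) (x : ℕ) : Monotone (fun a => Ack k a x) :=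
  monotone_nat_of_le_succ (fun a => Ack_le_succ k hk a x)

theorem stmt_1 (k m n : ℕ) (a b ms : ℕ → ℕ) (hk : 2 ≤ k) (hm : 0 < m)
    (hs : IsSandwich k m n a b ms) :
    (∀ i < n, ms i ≤ b (i + 1) ∧ b (i + 1) < ms (i + 1)) ∧
      (∀ i, 0 < i → i < n → a (i + 1) < a i) := by
  refine ⟨fun i hi => ⟨?_, ?_⟩, ?_⟩
  · have h := (hs.idx_lo i hi).trans_lt (hs.arg_hi i hi)
    have := (Ack_props k hk _).1.lt_iff_lt.1 h
    omega
  · rw [hs.ms_succ i hi]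
    exact (Ack_props k hk _).2 _
  · intro i h0 hi
    obtain ⟨j, rfl⟩ : ∃ j, i = j + 1 := ⟨i - 1, by omega⟩
    by_contra! hc
    have h1 : Ack k (a (j + 1)) (ms (j + 1)) ≤ Ack k (a (j + 1 + 1)) (ms (j + 1)) :=
      Ack_mono_idx k hk _ hc
    have h2 := (h1.trans (hs.idx_lo (j + 1) hi)).trans_lt (hs.arg_hi j (by omega))
    have h3 := (Ack_props k hk _).1.lt_iff_lt.1 h2
    rw [hs.ms_succ j (by omega)] at h3
    have := (Ack_props k hk (a (j + 1))).2 (b (j + 1))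
    omega
end

section
/- If A_a b is in k-normal form (that is, the number A_a b satisfies A_a b ≡_k A_a b + 0) and 0 < p < k, then A_a b · p is in extended k-normal form, i.e., A_a b · p ≡_k A_a b + (A_a b · (p−1)) with A_a b · (p−1) expressible as A_a b · (p−1) + 0 where 0 ≤ A_a b · (p−1) arises as the quotient–remainder decomposition with quotient p and remainder 0. -/
/-- `NF k m a b c` says that `m ≡_k A_a b + c`, i.e. `m` has `k`-normal form
`A_a b + c` (so `m = A_a b + c` and the `k`-sandwiching sequence of `m` ends
with the pair `(a, b)`). -/
def NF (k m a b c : ℕ) : Prop :=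
  m = Ack k a b + c ∧
    ∃ n as bs ms, 1 ≤ n ∧ IsSandwich k m n as bs ms ∧ a = as n ∧ b = bs n

/-- `SNF k m d p q` says that `m ≃_k d · p + q`, i.e. `m` has simplified
`k`-normal form `d · p + q`: `m ≡_k A_a b + c` for some `a`, `b`, `c` with
`d = A_a b`, `m = d * p + q` and `q < d`. -/
def SNF (k m d p q : ℕ) : Prop :=
  ∃ a b c, NF k m a b c ∧ d = Ack k a b ∧ m = d * p + q ∧ q < d

theorem Ack_pow (k : ℕ) (hk : 2 ≤ k) (a : ℕ) : ∀ b, ∃ x, Ack k a b = k ^ x := by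
  induction a with
  | zero => intro b; exact ⟨b, by simp [Ack]⟩
  | succ a ih =>
    intro b
    obtain ⟨j, rfl⟩ : ∃ j, k = j + 1 := ⟨k - 1, by omega⟩
    simp only [Ack]
    rw [Function.iterate_succ_apply', Function.iterate_succ_apply']
    exact ih _

theorem Ack_mul_lt {k a b c d p : ℕ} (hk : 2 ≤ k) (hpk : p < k)
    (h : Ack k a b < Ack k c d) : Ack k a b * p < Ack k c d := by
  obtain ⟨x, hx⟩ := Ack_pow k hk a b
  obtain ⟨y, hy⟩ := Ack_pow k hk c d
  rw [hx, hy] at h ⊢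
  have hxy : x < y := (Nat.pow_lt_pow_iff_right (a := k) (by omega)).1 h
  calc k ^ x * p < k ^ x * k := Nat.mul_lt_mul_of_pos_left hpk (by positivity)
    _ = k ^ (x + 1) := (pow_succ _ _).symm
    _ ≤ k ^ y := Nat.pow_le_pow_right (by omega) hxy

theorem stmt_8 (k a b p : ℕ) (hk : 2 ≤ k) (hNF : NF k (Ack k a b) a b 0)
    (hp : 0 < p) (hpk : p < k) :
    NF k (Ack k a b * p) a b (Ack k a b * (p - 1)) ∧
      SNF k (Ack k a b * p) (Ack k a b) p 0 := by
  have key : NF k (Ack k a b * p) a b (Ack k a b * (p - 1)) := by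
    obtain ⟨-, n, as, bs, ms, hn, hs, ha, hb⟩ := hNF
    have hle : Ack k a b ≤ Ack k a b * p := Nat.le_mul_of_pos_right _ hp
    refine ⟨?_, n, as, bs, ms, hn, ⟨hs.ms_zero, ?_, ?_, ?_, ?_, hs.ms_succ, ?_⟩, ha, hb⟩
    · obtain ⟨j, rfl⟩ : ∃ j, p = j + 1 := ⟨p - 1, by omega⟩
      simp only [Nat.add_sub_cancel]
      ring
    · exact fun i hi => (hs.idx_lo i hi).trans hle
    · exact fun i hi => Ack_mul_lt hk hpk (hs.idx_hi i hi)
    · exact fun i hi => (hs.arg_lo i hi).trans hle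
    · exact fun i hi => Ack_mul_lt hk hpk (hs.arg_hi i hi)
    · exact Ack_mul_lt hk hpk hs.halt
  refine ⟨key, a, b, _, key, rfl, by simp, ?_⟩
  obtain ⟨x, hx⟩ := Ack_pow k hk a b
  rw [hx]
  positivity
end

section
/- If m has simplified k-normal form m ≃_k d · (p+1) + q with p > 0, then the number d · p + q is itself in simplified k-normal form, i.e., d · p + q ≃_k d · p + q. -/
theorem aux_iter (f : ℕ → ℕ) (hf : ∀ x, x < f x) (n x : ℕ) : x + n ≤ f^[n] x := by
  induction n with
  | zero => simp
  | succ n ih => rw [Function.iterate_succ_apply']; have := hf (f^[n] x); omega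

theorem Ack_lt (k : ℕ) (hk : 2 ≤ k) (a x : ℕ) : x < Ack k a x := by
  induction a generalizing x with
  | zero => simp only [Ack]; exact Nat.lt_pow_self (by omega)
  | succ a ih =>
    have h := aux_iter ((Ack k a)^[k])
      (fun y => by have := aux_iter _ ih k y; omega) (x + 1) 1
    simp only [Ack]; omega

theorem Ack_mono (k : ℕ) (hk : 2 ≤ k) (a : ℕ) : Monotone (Ack k a) := by
  cases a with
  | zero => intro x y h; simp only [Ack]; exact Nat.pow_le_pow_right (by omega) h
  | succ a =>
    refine monotone_nat_of_le_succ fun x => ?_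
    simp only [Ack]
    rw [Function.iterate_succ_apply' _ (x + 1)]
    have := aux_iter _ (Ack_lt k hk a) k (((Ack k a)^[k])^[x + 1] 1)
    omega

theorem stmt_9 (k m d p q : ℕ) (hk : 2 ≤ k) (hm : SNF k m d (p + 1) q) (hp : 0 < p) :
    SNF k (d * p + q) d p q := by
  obtain ⟨a, b, c, ⟨hmc, n, as, bs, ms, hn, hS, ha, hb⟩, hd, hmd, hq⟩ := hm
  have hle : d * p + q ≤ m := by rw [hmd, Nat.mul_succ]; omega
  have hdm : d ≤ d * p + q := by
    have := Nat.le_mul_of_pos_right d hp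
    omega
  have hstep : ∀ i < n, Ack k (as (i + 1)) (ms i) ≤ ms (i + 1) := by
    intro i hi
    rw [hS.ms_succ i hi]
    apply Ack_mono k hk
    by_contra hlt
    have h1 : Ack k (as (i + 1)) (bs (i + 1) + 1) ≤ Ack k (as (i + 1)) (ms i) :=
      Ack_mono k hk _ (by omega)
    have h2 := hS.idx_lo i hi
    have h3 := hS.arg_hi i hi
    omega
  have hmsn : ms n = d := by
    obtain ⟨j, rfl⟩ : ∃ j, n = j + 1 := ⟨n - 1, by omega⟩
    rw [hS.ms_succ j (by omega), hd, ha, hb]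
  have hmon : ∀ j, ∀ i, i + j = n → ms i ≤ d := by
    intro j
    induction j with
    | zero => intro i hi; simp at hi; rw [hi, hmsn]
    | succ j ih =>
      intro i hi
      have h1 := ih (i + 1) (by omega)
      have h2 := hstep i (by omega)
      have h3 := Ack_lt k hk (as (i + 1)) (ms i)
      omega
  have hsd : ∀ i < n, ms (i + 1) ≤ d := fun i hi => hmon (n - (i + 1)) (i + 1) (by omega)
  refine ⟨a, b, d * p + q - d, ⟨by rw [← hd]; omega, n, as, bs, ms, hn, ?_, ha, hb⟩, hd, rfl, hq⟩
  exact
    { ms_zero := hS.ms_zero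
      idx_lo := fun i hi => ((hstep i hi).trans (hsd i hi)).trans hdm
      idx_hi := fun i hi => hle.trans_lt (hS.idx_hi i hi)
      arg_lo := fun i hi => by
        rw [← hS.ms_succ i hi]; exact (hsd i hi).trans hdm
      arg_hi := fun i hi => hle.trans_lt (hS.arg_hi i hi)
      ms_succ := hS.ms_succ
      halt := hle.trans_lt hS.halt }
end

section
/- Let m ≡_k A_a b with a > 0 and let (c_i)_{i≤a} be the left expansion sequence for A_a b. Then: (1) if 0 < ℓ < k and 0 < i ≤ a, then A_{a−i}^ℓ(c_{i−1}) is in k-normal form, i.e., A_{a−i}^ℓ(c_{i−1}) ≡_k A_{a−i}(A_{a−i}^{ℓ−1}(c_{i−1})); (2) if i ≤ a and either i > 0 or b > ⟨m⟩₋₁, then c_i is in k-normal form as written in its definition, i.e., c_0 ≡_k A_a(b−1) and, for i > 0, c_i ≡_k A_{a−i}(A_{a−i}^{k−1}(c_{i−1}) − 1). -/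
/-- The left expansion sequence `(c_i)_{i ≤ a}` for `A_a b` (base `k`):
`c_0 = A_a (b - 1)` and `c_i = A_{a-i} (A_{a-i}^{k-1} (c_{i-1}) - 1)` for `i ≥ 1`. -/
def leftExp (k a b : ℕ) : ℕ → ℕ
  | 0 => Ack k a (b - 1)
  | i + 1 => Ack k (a - (i + 1)) ((Ack k (a - (i + 1)))^[k - 1] (leftExp k a b i) - 1)

theorem iter_gt (f : ℕ → ℕ) (hf : ∀ x, x < f x) (j x : ℕ) (hj : 0 < j) : x < f^[j] x := by
  induction j with
  | zero => omega
  | succ j ih =>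
    rw [Function.iterate_succ_apply']
    rcases Nat.eq_zero_or_pos j with h | h
    · subst h; exact hf x
    · exact (ih h).trans (hf _)

theorem Ack_succ_succ (k a b : ℕ) :
    Ack k (a + 1) (b + 1) = (Ack k a)^[k] (Ack k (a + 1) b) := by
  simp only [Ack]
  rw [Function.iterate_succ_apply']

theorem Ack_succ_zero (k a : ℕ) : Ack k (a + 1) 0 = (Ack k a)^[k] 1 := by
  simp only [Ack]
  rfl

theorem Ack_gt {k : ℕ} (hk : 2 ≤ k) (a : ℕ) : ∀ x, x < Ack k a x := by
  induction a with
  | zero => intro x; simpa [Ack] using Nat.lt_pow_self (by omega : 1 < k)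
  | succ a ih =>
    intro x
    induction x with
    | zero =>
      rw [Ack_succ_zero]
      exact Nat.zero_lt_one.trans (iter_gt _ ih k 1 (by omega))
    | succ x ihx =>
      rw [Ack_succ_succ]
      have := iter_gt _ ih k (Ack k (a + 1) x) (by omega)
      omega

theorem Ack_sm {k : ℕ} (hk : 2 ≤ k) (a : ℕ) : StrictMono (Ack k a) := by
  cases a with
  | zero => intro x y h; simpa [Ack] using Nat.pow_lt_pow_right (by omega : 1 < k) h
  | succ a =>
    refine strictMono_nat_of_lt_succ fun b => ?_
    rw [Ack_succ_succ]
    exact iter_gt _ (Ack_gt hk a) _ _ (by omega)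

inductive Reach (k v : ℕ) : ℕ → Prop
  | zero : Reach k v 0
  | step {x a b : ℕ} : Reach k v x → Ack k a x ≤ v → v < Ack k (a + 1) x →
      Ack k a b ≤ v → v < Ack k a (b + 1) → Reach k v (Ack k a b)

theorem Reach.down {k m v x : ℕ} (hk : 2 ≤ k) (h : Reach k m x) (hv : v ≤ m) :
    x ≤ v → Reach k v x := by
  induction h with
  | zero => intro _; exact Reach.zero
  | @step x a b hr h1 h2 h3 h4 ih =>
    intro hb
    have hxb : x ≤ b := by
      have := (Ack_sm hk a).lt_iff_lt.1 (h1.trans_lt h4)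
      omega
    have h5 : Ack k a x ≤ v := ((Ack_sm hk a).monotone hxb).trans hb
    exact Reach.step (ih ((Ack_gt hk a x).le.trans h5)) h5 (hv.trans_lt h2) hb (hv.trans_lt h4)

theorem Reach.seq {k v x : ℕ} (h : Reach k v x) : ∃ n, ∃ a b ms : ℕ → ℕ, ms 0 = 0 ∧ ms n = x ∧
    (∀ i < n, Ack k (a (i + 1)) (ms i) ≤ v ∧ v < Ack k (a (i + 1) + 1) (ms i) ∧
      Ack k (a (i + 1)) (b (i + 1)) ≤ v ∧ v < Ack k (a (i + 1)) (b (i + 1) + 1) ∧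
      ms (i + 1) = Ack k (a (i + 1)) (b (i + 1))) ∧
    (0 < n → Ack k (a n) (b n) = x) := by
  induction h with
  | zero => exact ⟨0, fun _ => 0, fun _ => 0, fun _ => 0, rfl, rfl, by simp, by simp⟩
  | @step x a b hr h1 h2 h3 h4 ih =>
    obtain ⟨n, as, bs, ms, h0, hn, hs, -⟩ := ih
    refine ⟨n + 1, fun i => if i = n + 1 then a else as i, fun i => if i = n + 1 then b else bs i,
      fun i => if i = n + 1 then Ack k a b else ms i, ?_, ?_, ?_, ?_⟩
    · simp [h0]
    · simp
    · intro i hi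
      rcases Nat.lt_succ_iff_lt_or_eq.1 hi with h | h
      · have e1 : i ≠ n := by omega
        have e2 : i ≠ n + 1 := by omega
        simpa [e1, e2] using hs i h
      · subst h
        simp [hn, h1, h2, h3, h4]
    · simp

theorem Reach.nf {k v x a b : ℕ} (hk : 2 ≤ k) (h : Reach k v x) (h1 : Ack k a x ≤ v)
    (h2 : v < Ack k (a + 1) x) (h3 : v = Ack k a b) : NF k v a b 0 := by
  obtain ⟨n, as, bs, ms, h0, hn, hs, -⟩ := h.seq
  have h4 : v < Ack k a (b + 1) := h3 ▸ Ack_sm hk a (Nat.lt_succ_self b)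
  refine ⟨h3, n + 1, fun i => if i = n + 1 then a else as i,
    fun i => if i = n + 1 then b else bs i,
    fun i => if i = n + 1 then v else ms i, by omega, ?_, by simp, by simp⟩
  have key : ∀ i < n + 1, i ≠ n + 1 ∧ ((i ≠ n ∧ i < n) ∨ i = n) := by intro i hi; omega
  constructor
  · simp [h0]
  · intro i hi
    obtain ⟨e2, ⟨e1, h⟩ | h⟩ := key i hi
    · simpa [e1, e2] using (hs i h).1
    · subst h; simpa [hn] using h1
  · intro i hi
    obtain ⟨e2, ⟨e1, h⟩ | h⟩ := key i hi
    · simpa [e1, e2] using (hs i h).2.1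
    · subst h; simpa [hn] using h2
  · intro i hi
    obtain ⟨e2, ⟨e1, h⟩ | h⟩ := key i hi
    · simpa [e1, e2] using (hs i h).2.2.1
    · subst h; simpa using h3.ge
  · intro i hi
    obtain ⟨e2, ⟨e1, h⟩ | h⟩ := key i hi
    · simpa [e1, e2] using (hs i h).2.2.2.1
    · subst h; simpa using h4
  · intro i hi
    obtain ⟨e2, ⟨e1, h⟩ | h⟩ := key i hi
    · simpa [e1, e2] using (hs i h).2.2.2.2
    · subst h; simpa using h3
  · simpa using Ack_gt hk 0 v

theorem IsSandwich.reach {k m n : ℕ} {a b ms : ℕ → ℕ} (hs : IsSandwich k m n a b ms) :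
    ∀ j ≤ n, Reach k m (ms j) := by
  intro j
  induction j with
  | zero => intro _; rw [hs.ms_zero]; exact Reach.zero
  | succ j ih =>
    intro hj
    rw [hs.ms_succ j hj]
    exact Reach.step (ih (by omega)) (hs.idx_lo j hj) (hs.idx_hi j hj) (hs.arg_lo j hj)
      (hs.arg_hi j hj)

theorem leftExp_succ (k a b i d : ℕ) (h : i + d + 1 = a) :
    leftExp k a b (i + 1) = Ack k d ((Ack k d)^[k - 1] (leftExp k a b i) - 1) := by
  have : a - (i + 1) = d := by omega
  simp only [leftExp, this]

theorem main_inv {k m a b p : ℕ} (hk : 2 ≤ k) (hb : 1 ≤ b) (hm : m = Ack k a b)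
    (hr : Reach k m p) (hp : p ≤ b) (hmp : m < Ack k (a + 1) p) :
    ∀ i d, i + d + 1 = a → m = (Ack k d)^[k] (leftExp k a b i) ∧
      ∀ v, Ack k d (leftExp k a b i) ≤ v → v < m →
        ∃ x, Reach k v x ∧ Ack k d x ≤ v ∧ m ≤ Ack k (d + 1) x := by
  obtain ⟨b, rfl⟩ : ∃ b', b = b' + 1 := ⟨b - 1, by omega⟩
  intro i
  induction i with
  | zero =>
    intro d hd
    obtain rfl : a = d + 1 := by omega
    have hc : leftExp k (d + 1) (b + 1) 0 = Ack k (d + 1) b := by simp [leftExp]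
    rw [hc]
    refine ⟨by rw [hm, Ack_succ_succ], fun v h1 h2 => ?_⟩
    have h3 : Ack k (d + 1) b ≤ v := (Ack_gt hk d _).le.trans h1
    have h4 : b + 1 ≤ Ack k (d + 1) b := Ack_gt hk (d + 1) b
    have hr' : Reach k v p := hr.down hk h2.le (by omega)
    rcases Nat.lt_or_ge p (b + 1) with h | h
    · refine ⟨Ack k (d + 1) b, ?_, h1, ?_⟩
      · exact Reach.step hr' (((Ack_sm hk _).monotone (by omega)).trans h3) (h2.trans hmp) h3
          (hm ▸ h2)
      · rw [hm]; exact (Ack_sm hk _).monotone h4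
    · obtain rfl : p = b + 1 := by omega
      exact ⟨b + 1, hr', ((Ack_sm hk d).monotone h4).trans h1, hm.le⟩
  | succ i ih =>
    intro d hd
    obtain ⟨E, Q⟩ := ih (d + 1) (by omega)
    rw [leftExp_succ k a (b + 1) i (d + 1) (by omega)]
    generalize leftExp k a (b + 1) i = c at *
    have hy := iter_gt _ (Ack_gt hk (d + 1)) (k - 1) c (by omega)
    have E' : m = Ack k (d + 1) ((Ack k (d + 1))^[k - 1] c) := by
      rw [E, ← Function.iterate_succ_apply' (Ack k (d + 1))]
      congr 2
      omega
    obtain ⟨y, hy'⟩ : ∃ y, (Ack k (d + 1))^[k - 1] c = y + 1 := ⟨_, (Nat.sub_add_cancel (by omega)).symm⟩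
    rw [hy'] at hy E' ⊢
    simp only [Nat.add_sub_cancel]
    refine ⟨by rw [E', Ack_succ_succ], fun v h1 h2 => ?_⟩
    have h3 : Ack k (d + 1) y ≤ v := (Ack_gt hk d _).le.trans h1
    have h5 : Ack k (d + 1) c ≤ v := ((Ack_sm hk _).monotone (by omega)).trans h3
    obtain ⟨x, hx, hx1, hx2⟩ := Q v h5 h2
    refine ⟨_, Reach.step hx hx1 (h2.trans_le hx2) h3 (E' ▸ h2), h1, ?_⟩
    rw [E']
    exact (Ack_sm hk _).monotone (Ack_gt hk (d + 1) y)

theorem main_nf {k m a b p : ℕ} (hk : 2 ≤ k) (hb : 1 ≤ b) (hm : m = Ack k a b)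
    (hr : Reach k m p) (hp : p ≤ b) (hmp : m < Ack k (a + 1) p) :
    (∀ l i, 0 < l → l < k → 0 < i → i ≤ a →
      NF k ((Ack k (a - i))^[l] (leftExp k a b (i - 1))) (a - i)
        ((Ack k (a - i))^[l - 1] (leftExp k a b (i - 1))) 0) ∧
    (p < b → NF k (leftExp k a b 0) a (b - 1) 0) ∧
    (∀ i, 0 < i → i ≤ a →
      NF k (leftExp k a b i) (a - i)
        ((Ack k (a - i))^[k - 1] (leftExp k a b (i - 1)) - 1) 0) := by
  have key := main_inv hk hb hm hr hp hmp
  refine ⟨?_, ?_, ?_⟩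
  · intro l i hl hlk hi hia
    obtain ⟨d, hd⟩ : ∃ d, d = a - i := ⟨_, rfl⟩
    rw [← hd]
    obtain ⟨E, Q⟩ := key (i - 1) d (by omega)
    generalize leftExp k a b (i - 1) = c at *
    obtain ⟨l, rfl⟩ : ∃ l', l = l' + 1 := ⟨l - 1, by omega⟩
    simp only [Nat.add_sub_cancel]
    have h2 : (Ack k d)^[l + 1] c < m := by
      have : k = (k - (l + 1)) + (l + 1) := by omega
      have e : m = (Ack k d)^[k - (l + 1)] ((Ack k d)^[l + 1] c) := by
        rw [← Function.iterate_add_apply, ← this, E]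
      rw [e]
      exact iter_gt _ (Ack_gt hk d) _ _ (by omega)
    have h1 : Ack k d c ≤ (Ack k d)^[l + 1] c := by
      rw [Function.iterate_succ_apply]
      rcases Nat.eq_zero_or_pos l with h | h
      · subst h; exact le_rfl
      · exact (iter_gt _ (Ack_gt hk d) _ _ h).le
    obtain ⟨x, hx, hx1, hx2⟩ := Q _ h1 h2
    exact hx.nf hk hx1 (h2.trans_le hx2) (Function.iterate_succ_apply' _ _ _)
  · intro hpb
    have hc : leftExp k a b 0 = Ack k a (b - 1) := rfl
    have h1 : Ack k a p ≤ Ack k a (b - 1) := (Ack_sm hk a).monotone (by omega)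
    have h2 : Ack k a (b - 1) < m := hm ▸ Ack_sm hk a (by omega)
    rw [hc]
    exact (hr.down hk h2.le ((Ack_gt hk a p).le.trans h1)).nf hk h1 (h2.trans hmp) rfl
  · intro i hi hia
    obtain ⟨i, rfl⟩ : ∃ i', i = i' + 1 := ⟨i - 1, by omega⟩
    obtain ⟨d, hd⟩ : ∃ d, d = a - (i + 1) := ⟨_, rfl⟩
    obtain ⟨E, Q⟩ := key i d (by omega)
    rw [← hd, leftExp_succ k a b i d (by omega)]
    simp only [Nat.add_sub_cancel]
    generalize leftExp k a b i = c at *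
    have hy := iter_gt _ (Ack_gt hk d) (k - 1) c (by omega)
    have E' : m = Ack k d ((Ack k d)^[k - 1] c) := by
      rw [E, ← Function.iterate_succ_apply' (Ack k d)]
      congr 2
      omega
    have h1 : Ack k d c ≤ Ack k d ((Ack k d)^[k - 1] c - 1) :=
      (Ack_sm hk d).monotone (by omega)
    have h2 : Ack k d ((Ack k d)^[k - 1] c - 1) < m := by
      rw [E']; exact Ack_sm hk d (by omega)
    obtain ⟨x, hx, hx1, hx2⟩ := Q _ h1 h2
    exact hx.nf hk hx1 (h2.trans_le hx2) rfl

theorem leftExp_zero_one (k a i : ℕ) : leftExp k a 0 i = leftExp k a 1 i := by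
  induction i with
  | zero => rfl
  | succ i ih => simp only [leftExp, ih]

theorem stmt_14 (k m a b n : ℕ) (aseq bseq ms : ℕ → ℕ) (hk : 2 ≤ k) (ha : 0 < a)
    (hn : 1 ≤ n) (hs : IsSandwich k m n aseq bseq ms) (hm : m = Ack k a b)
    (han : aseq n = a) (hbn : bseq n = b) :
    (∀ l i, 0 < l → l < k → 0 < i → i ≤ a →
      NF k ((Ack k (a - i))^[l] (leftExp k a b (i - 1))) (a - i)
        ((Ack k (a - i))^[l - 1] (leftExp k a b (i - 1))) 0) ∧
    (ms (n - 1) < b → NF k (leftExp k a b 0) a (b - 1) 0) ∧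
    (∀ i, 0 < i → i ≤ a →
      NF k (leftExp k a b i) (a - i)
        ((Ack k (a - i))^[k - 1] (leftExp k a b (i - 1)) - 1) 0) := by
  obtain ⟨n, rfl⟩ : ∃ n', n = n' + 1 := ⟨n - 1, by omega⟩
  have hr := hs.reach n (by omega)
  have hlo := hs.idx_lo n (by omega)
  have hhi := hs.idx_hi n (by omega)
  rw [han] at hlo hhi
  simp only [Nat.add_sub_cancel]
  have hp : ms n ≤ b := (Ack_sm hk a).le_iff_le.1 (hm ▸ hlo)
  rcases Nat.eq_zero_or_pos b with h | h
  · subst h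
    have := main_nf (a := a) (b := 1) (p := 0) hk le_rfl rfl Reach.zero (by omega) (by
      rw [Ack_succ_zero]
      obtain ⟨j, rfl⟩ : ∃ j, k = j + 1 := ⟨k - 1, by omega⟩
      rw [Function.iterate_succ_apply]
      exact iter_gt _ (Ack_gt hk a) _ _ (by omega))
    simp only [leftExp_zero_one]
    exact ⟨this.1, fun h => by omega, this.2.2⟩
  · exact main_nf hk h hm hr hp hhi
end

section
/- Let 2 ≤ k < ℓ be natural numbers. If m ≡_k A_a(k,b) + c, then ⟨k→ℓ⟩m ≡_ℓ A_{⟨k→ℓ⟩a}(ℓ, ⟨k→ℓ⟩b) + ⟨k→ℓ⟩c; that is, the base-change operation preserves normal forms. Moreover, if (A_{a_i}(k,b_i))_{i=1}^n is the k-sandwiching sequence of m, then (A_{⟨k→ℓ⟩a_i}(ℓ, ⟨k→ℓ⟩b_i))_{i=1}^n is the ℓ-sandwiching sequence of ⟨k→ℓ⟩m. -/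
/-- `BCH k l m v` is the graph of the base-change operation `⟨k→l⟩`:
`⟨k→l⟩0 = 0` and, for `m ≡_k A_a(k, b) + c`,
`⟨k→l⟩m = A_{⟨k→l⟩a}(l, ⟨k→l⟩b) + ⟨k→l⟩c`. -/
inductive BCH (k l : ℕ) : ℕ → ℕ → Prop
  | zero : BCH k l 0 0
  | step (m a b c a' b' c' : ℕ) : NF k m a b c →
      BCH k l a a' → BCH k l b b' → BCH k l c c' →
      BCH k l m (Ack l a' b' + c')

namespace AckBC

theorem ack_zero (k b : ℕ) : Ack k 0 b = k ^ b := by simp [Ack]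

theorem ack_succ_zero (k a : ℕ) : Ack k (a+1) 0 = (Ack k a)^[k] 1 := by simp [Ack]

theorem ack_succ_succ (k a b : ℕ) :
    Ack k (a+1) (b+1) = (Ack k a)^[k] (Ack k (a+1) b) := by
  rw [Ack, Ack, Function.iterate_succ_apply']

theorem ack_succ_eq (k a b : ℕ) : Ack k (a+1) b = (Ack k a)^[k * (b+1)] 1 := by
  rw [Ack, Function.iterate_mul]

theorem it_ge {g : ℕ → ℕ} (h : ∀ x, x < g x) (n x : ℕ) : x + n ≤ g^[n] x := by
  induction n with
  | zero => simp
  | succ n ih => rw [Function.iterate_succ_apply']; have := h (g^[n] x); omega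

theorem it_mono_n {g : ℕ → ℕ} (h : ∀ x, x < g x) {n n' : ℕ} (hn : n ≤ n') (x : ℕ) :
    g^[n] x ≤ g^[n'] x := by
  obtain ⟨d, rfl⟩ := Nat.exists_eq_add_of_le hn
  rw [add_comm, Function.iterate_add_apply]
  have := it_ge h d (g^[n] x); omega

theorem it_le {g g' : ℕ → ℕ} (hm : Monotone g') (h : ∀ x, g x ≤ g' x) (n : ℕ) {x y : ℕ}
    (hxy : x ≤ y) : g^[n] x ≤ g'^[n] y := by
  induction n with
  | zero => simpa
  | succ n ih =>
    rw [Function.iterate_succ_apply', Function.iterate_succ_apply']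
    exact (h _).trans (hm ih)

theorem ack_basic {k : ℕ} (hk : 2 ≤ k) (a : ℕ) :
    StrictMono (Ack k a) ∧ ∀ b, b < Ack k a b := by
  induction a with
  | zero =>
    constructor
    · intro x y h
      rw [ack_zero, ack_zero]
      exact Nat.pow_lt_pow_right (by omega) h
    · intro b; rw [ack_zero]; exact Nat.lt_pow_self (by omega)
  | succ a ih =>
    have h1 : StrictMono (Ack k (a+1)) := by
      apply strictMono_nat_of_lt_succ
      intro n
      rw [ack_succ_succ]
      have := it_ge ih.2 k (Ack k (a+1) n); omega
    refine ⟨h1, ?_⟩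
    intro b
    induction b with
    | zero => rw [ack_succ_zero]; have := it_ge ih.2 k 1; omega
    | succ b ihb => have := h1 (Nat.lt_succ_self b); simp only [Nat.succ_eq_add_one] at this; omega

theorem sm {k : ℕ} (hk : 2 ≤ k) (a : ℕ) : StrictMono (Ack k a) := (ack_basic hk a).1
theorem lt_ack {k : ℕ} (hk : 2 ≤ k) (a b : ℕ) : b < Ack k a b := (ack_basic hk a).2 b

theorem ack_lt_succ {k : ℕ} (hk : 2 ≤ k) (a x : ℕ) : Ack k a x < Ack k (a+1) x := by
  induction x with
  | zero =>
    rw [ack_succ_zero]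
    have h1 : (Ack k a)^[1] 1 ≤ (Ack k a)^[k] 1 := it_mono_n (lt_ack hk a) (by omega) 1
    have h2 := sm hk a (show 0 < 1 by omega)
    simp only [Function.iterate_one] at h1
    omega
  | succ x ih =>
    rw [ack_succ_succ]
    have h0 := lt_ack hk a x
    have h1 : (Ack k a)^[1] (Ack k (a+1) x) ≤ (Ack k a)^[k] (Ack k (a+1) x) :=
      it_mono_n (lt_ack hk a) (by omega) _
    have h2 := sm hk a (show x + 1 < Ack k (a+1) x by omega)
    simp only [Function.iterate_one] at h1
    omega

theorem sma {k : ℕ} (hk : 2 ≤ k) (x : ℕ) : StrictMono (fun a => Ack k a x) :=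
  strictMono_nat_of_lt_succ (fun a => ack_lt_succ hk a x)

theorem ack_le {k : ℕ} (hk : 2 ≤ k) {a a' b b' : ℕ} (ha : a ≤ a') (hb : b ≤ b') :
    Ack k a b ≤ Ack k a' b' :=
  ((sm hk a).monotone hb).trans ((sma hk b').monotone ha)

theorem lt_ack_idx {k : ℕ} (hk : 2 ≤ k) (a b : ℕ) : a < Ack k a b := by
  induction a with
  | zero => have := lt_ack hk 0 b; omega
  | succ a ih => have := ack_lt_succ hk a b; omega

theorem ack_base {k l : ℕ} (hk : 2 ≤ k) (hkl : k ≤ l) (a b : ℕ) : Ack k a b ≤ Ack l a b := by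
  induction a generalizing b with
  | zero => rw [ack_zero, ack_zero]; exact Nat.pow_le_pow_left hkl b
  | succ a ih =>
    rw [ack_succ_eq, ack_succ_eq]
    refine (it_le (sm (by omega : 2 ≤ l) a).monotone ih _ le_rfl).trans ?_
    exact it_mono_n (lt_ack (by omega) a) (Nat.mul_le_mul_right _ hkl) 1

theorem range_ack {k : ℕ} (hk : 2 ≤ k) {a a' : ℕ} (h : a' ≤ a) (b : ℕ) :
    ∃ w, Ack k a b = Ack k a' w := by
  induction a, h using Nat.le_induction generalizing b with
  | base => exact ⟨b, rfl⟩
  | succ n hn ih =>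
    have : ∃ j, k * (b+1) = j + 1 := ⟨k * (b+1) - 1, by
      have : 0 < k * (b+1) := by positivity
      omega⟩
    obtain ⟨j, hj⟩ := this
    rw [ack_succ_eq, hj, Function.iterate_succ_apply']
    exact ih _

theorem idx_lt {k : ℕ} (hk : 2 ≤ k) {a b e c : ℕ} (hc : Ack k a b ≤ c)
    (h : Ack k e c < Ack k a (b+1)) : e < a := by
  by_contra hh
  have := ack_le hk (show a ≤ e by omega) (show b + 1 ≤ c by have := lt_ack hk a b; omega)
  omega

theorem div_lem {k : ℕ} (hk : 2 ≤ k) {a b e c : ℕ} (hc : Ack k a b ≤ c)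
    (h : Ack k e c < Ack k a (b+1)) : Ack k e (c+1) ≤ Ack k a (b+1) := by
  have he := idx_lt hk hc h
  obtain ⟨w, hw⟩ := range_ack hk he.le (b+1)
  rw [hw] at h ⊢
  have := (sm hk e).lt_iff_lt.1 h
  exact (sm hk e).monotone this

inductive NFp (k : ℕ) : ℕ → ℕ → Prop
  | base (a b : ℕ) : Ack k a b < Ack k (a+1) 0 → NFp k a b
  | step (a0 b0 a b : ℕ) : NFp k a0 b0 → Ack k a0 b0 ≤ b →
      Ack k a b < Ack k (a+1) (Ack k a0 b0) → Ack k a b < Ack k a0 (b0+1) → NFp k a b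

def Pt (k x m : ℕ) : Prop :=
  x = 0 ∨ ∃ a b, NFp k a b ∧ x = Ack k a b ∧ x ≤ m ∧ m < Ack k a (b+1)

theorem Pt.le {k x m : ℕ} (h : Pt k x m) : x ≤ m := by
  rcases h with h | ⟨a, b, _, _, h, _⟩ <;> omega

theorem Pt.down {k x m m' : ℕ} (h : Pt k x m) (h1 : x ≤ m') (h2 : m' ≤ m) : Pt k x m' := by
  rcases h with h | ⟨a, b, h, h', h3, h4⟩
  · exact Or.inl h
  · exact Or.inr ⟨a, b, h, h', h1, by omega⟩

theorem NFp.pred {k a b : ℕ} (hk : 2 ≤ k) (h : NFp k a b) :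
    ∃ p, p ≤ b ∧ Pt k p (Ack k a b) ∧ Ack k a b < Ack k (a+1) p := by
  cases h with
  | base a b h => exact ⟨0, by omega, Or.inl rfl, h⟩
  | step a0 b0 a b h h1 h2 h3 =>
    exact ⟨_, h1, Or.inr ⟨a0, b0, h, rfl, by have := lt_ack hk a b; omega, h3⟩, h2⟩

theorem ex_max {g : ℕ → ℕ} (hg : StrictMono g) {m : ℕ} (h : g 0 ≤ m) :
    ∃ b, g b ≤ m ∧ m < g (b+1) := by
  have hb : ∃ b, m < g b := ⟨m+1, by have := hg.id_le (m+1); simp at this; omega⟩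
  classical
  have h1 := Nat.find_spec hb
  have h2 : Nat.find hb ≠ 0 := by intro h0; rw [h0] at h1; omega
  obtain ⟨b, hb'⟩ := Nat.exists_eq_succ_of_ne_zero h2
  refine ⟨b, ?_, by rw [hb'] at h1; exact h1⟩
  have := Nat.find_min hb (show b < _ by rw [hb']; exact Nat.lt_succ_self b)
  omega

theorem Pt.next {k : ℕ} (hk : 2 ≤ k) {x m e : ℕ} (h : Pt k x m) (h1 : Ack k e x ≤ m)
    (h2 : m < Ack k (e+1) x) :
    ∃ b, x ≤ b ∧ NFp k e b ∧ Ack k e b ≤ m ∧ m < Ack k e (b+1) := by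
  obtain ⟨b, hb1, hb2⟩ := ex_max (sm hk e) (m := m)
    (((sm hk e).monotone (Nat.zero_le x)).trans h1)
  have hxb : x ≤ b := by
    by_contra hh
    have := (sm hk e).monotone (show b + 1 ≤ x by omega)
    omega
  refine ⟨b, hxb, ?_, hb1, hb2⟩
  rcases h with rfl | ⟨a0, b0, h, rfl, h3, h4⟩
  · exact NFp.base _ _ (by omega)
  · exact NFp.step a0 b0 _ _ h hxb (by omega) (by omega)

theorem Pt.next' {k : ℕ} (hk : 2 ≤ k) {x m : ℕ} (h1 : Ack k 0 x ≤ m) :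
    ∃ e, Ack k e x ≤ m ∧ m < Ack k (e+1) x :=
  ex_max (sma hk x) h1

theorem ex_last {k : ℕ} (hk : 2 ≤ k) {m : ℕ} (hm : 0 < m) :
    ∃ a b, NFp k a b ∧ Ack k a b ≤ m ∧ m < Ack k a (b+1) ∧ m < Ack k 0 (Ack k a b) := by
  have key : ∀ n x, n = m - x → Pt k x m → Ack k 0 x ≤ m →
      ∃ a b, NFp k a b ∧ Ack k a b ≤ m ∧ m < Ack k a (b+1) ∧ m < Ack k 0 (Ack k a b) := by
    intro n
    induction n using Nat.strong_induction_on with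
    | _ n ih =>
      intro x hn hP h0
      obtain ⟨e, he1, he2⟩ := Pt.next' hk h0
      obtain ⟨b, hb, hN, h1, h2⟩ := hP.next hk he1 he2
      by_cases h : m < Ack k 0 (Ack k e b)
      · exact ⟨e, b, hN, h1, h2, h⟩
      · have := lt_ack hk e b
        exact ih (m - Ack k e b) (by omega) _ rfl (Or.inr ⟨e, b, hN, rfl, h1, h2⟩) (by omega)
  exact key _ 0 rfl (Or.inl rfl) (by rw [ack_zero]; simp; omega)

structure IsBC (k l : ℕ) (f : ℕ → ℕ) : Prop where
  zero : f 0 = 0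
  nf : ∀ a b c, NFp k a b → Ack k a b + c < Ack k a (b+1) →
    Ack k a b + c < Ack k 0 (Ack k a b) →
    f (Ack k a b + c) = Ack l (f a) (f b) + f c

section
variable {k l : ℕ} {f : ℕ → ℕ}

theorem IsBC.val (hf : IsBC k l f) (hk : 2 ≤ k) {a b : ℕ} (h : NFp k a b) :
    f (Ack k a b) = Ack l (f a) (f b) := by
  have := hf.nf a b 0 h (sm hk a (Nat.lt_succ_self b)) (lt_ack hk 0 _)
  simpa [hf.zero] using this

theorem IsBC.ge (hf : IsBC k l f) (hk : 2 ≤ k) (hkl : k < l) (m : ℕ) : m ≤ f m := by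
  induction m using Nat.strong_induction_on with
  | _ m ih =>
    rcases Nat.eq_zero_or_pos m with rfl | hm
    · omega
    obtain ⟨a, b, hN, h1, h2, h3⟩ := ex_last hk hm
    obtain ⟨c, rfl⟩ := Nat.exists_eq_add_of_le h1
    rw [hf.nf a b c hN h2 h3]
    have ha := ih a (by have := lt_ack_idx hk a b; omega)
    have hb := ih b (by have := lt_ack hk a b; omega)
    have hc := ih c (by have := lt_ack hk a b; omega)
    have e1 := ack_base hk hkl.le a b
    have e2 := ack_le (k := l) (by omega) ha hb
    omega

theorem IsBC.last (hf : IsBC k l f) (hk : 2 ≤ k) {a b : ℕ} (hN : NFp k a b) (q r : ℕ)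
    (h1 : (q+1) * Ack k a b + r < Ack k a (b+1))
    (h2 : (q+1) * Ack k a b + r < Ack k 0 (Ack k a b)) :
    f ((q+1) * Ack k a b + r) = (q+1) * f (Ack k a b) + f r := by
  induction q with
  | zero =>
    simp only [zero_add, one_mul] at h1 h2 ⊢
    rw [hf.nf a b r hN h1 h2, hf.val hk hN]
  | succ q ih =>
    have e : (q + 1 + 1) * Ack k a b + r = Ack k a b + ((q+1) * Ack k a b + r) := by ring
    rw [e] at h1 h2 ⊢
    rw [hf.nf a b _ hN h1 h2, ih (by omega) (by omega), hf.val hk hN]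
    ring

def Mono (f : ℕ → ℕ) (m : ℕ) : Prop := ∀ m' < m, f m' < f m

def TT (k l : ℕ) (f : ℕ → ℕ) (m x : ℕ) : Prop :=
  Pt k x m → ∀ d j, Mono f d → m < (Ack k d)^[j] x → m < Ack k (d+1) x → f m < (Ack l (f d))^[j] (f x)

def AH (k l : ℕ) (f : ℕ → ℕ) (m : ℕ) : Prop :=
  ∀ a b, NFp k a b → Ack k a b ≤ m → m < Ack k a (b+1) → f m < Ack l (f a) (f b + 1)

theorem mono_le {n : ℕ} (h : ∀ m ≤ n, Mono f m) {x y : ℕ} (hy : y ≤ n) (hxy : x ≤ y) :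
    f x ≤ f y := by
  rcases hxy.eq_or_lt with rfl | h'
  · exact le_rfl
  · exact (h y hy x h').le

-- q, r bound
theorem last_bound (hf : IsBC k l f) (hk : 2 ≤ k) {m : ℕ}
    (hM : ∀ m' ≤ m, Mono f m') {a b : ℕ} (hN : NFp k a b) (h1 : Ack k a b ≤ m)
    (h2 : m < Ack k a (b+1)) (h3 : m < Ack k 0 (Ack k a b)) :
    f m < (m / Ack k a b + 1) * f (Ack k a b) := by
  have hx : 0 < Ack k a b := by have := lt_ack hk a b; omega
  have hq : 0 < m / Ack k a b := Nat.div_pos h1 hx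
  obtain ⟨q, hq'⟩ := Nat.exists_eq_succ_of_ne_zero hq.ne'
  have hr := Nat.mod_lt m hx
  have hm : (q+1) * Ack k a b + m % Ack k a b = m := by
    have := Nat.div_add_mod' m (Ack k a b)
    rw [hq'] at this; exact this
  have e := hf.last hk hN q (m % Ack k a b) (by rw [hm]; exact h2) (by rw [hm]; exact h3)
  rw [hm] at e
  have hfr : f (m % Ack k a b) < f (Ack k a b) := hM _ h1 _ hr
  rw [e, hq', Nat.succ_eq_add_one, add_mul (q+1) 1, one_mul]
  omega

theorem ah_zero (hf : IsBC k l f) (hk : 2 ≤ k) (hkl : k < l) {m : ℕ}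
    (hM : ∀ m' ≤ m, Mono f m') {b : ℕ} (hN : NFp k 0 b) (h1 : Ack k 0 b ≤ m)
    (h2 : m < Ack k 0 (b+1)) : f m < Ack l 0 (f b + 1) := by
  have h3 : m < Ack k 0 (Ack k 0 b) :=
    h2.trans_le ((sm hk 0).monotone (lt_ack hk 0 b))
  have h := last_bound hf hk hM hN h1 h2 h3
  have hq : m / Ack k 0 b < k := by
    apply Nat.div_lt_of_lt_mul
    rw [ack_zero] at h2 ⊢
    rw [pow_succ] at h2; exact h2
  refine h.trans_le ?_
  rw [hf.val hk hN, hf.zero, ack_zero l, ack_zero l, pow_succ, mul_comm]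
  exact Nat.mul_le_mul_left _ (by omega)

theorem two_mul_le_pow {l : ℕ} (hl : 2 ≤ l) (z : ℕ) : 2 * z ≤ l ^ z := by
  refine le_trans ?_ (Nat.pow_le_pow_left hl z)
  cases z with
  | zero => simp
  | succ n => rw [pow_succ, mul_comm]; exact Nat.mul_le_mul_right _ (Nat.lt_pow_self (by omega))

theorem big (hk : 2 ≤ k) (hkl : k < l) (a b : ℕ) : l ^ (Ack k (a+1) b) ≤ Ack l (a+1) b := by
  have hl : 2 ≤ l := by omega
  have h1 : k * (b+1) + 1 ≤ l * (b+1) := by nlinarith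
  rw [ack_succ_eq l]
  refine le_trans ?_ (it_mono_n (lt_ack hl a) h1 1)
  rw [Function.iterate_succ_apply', ← ack_zero]
  apply ack_le hl (Nat.zero_le a)
  rw [ack_succ_eq]
  exact it_le (sm hl a).monotone (ack_base hk hkl.le a) _ le_rfl

theorem halt_bound (hf : IsBC k l f) (hk : 2 ≤ k) (hkl : k < l) {m : ℕ}
    (hM : ∀ m' ≤ m, Mono f m') {x : ℕ} (hP : Pt k x m) (h3 : m < Ack k 0 x) :
    f m < Ack l 0 (f x) := by
  have hl : 2 ≤ l := by omega
  rcases hP with rfl | ⟨a, b, hN, rfl, h1, h2⟩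
  · rw [ack_zero] at h3
    have : m = 0 := by simpa using h3
    subst this
    have := lt_ack hl 0 (f 0); omega
  · rcases a with _ | a
    · refine (ah_zero hf hk hkl hM hN h1 h2).trans_le ?_
      apply (sm hl 0).monotone
      rw [hf.val hk hN]
      exact lt_ack hl _ _
    · refine (last_bound hf hk hM hN h1 h2 h3).trans_le ?_
      have hge : l ^ (Ack k (a+1) b) ≤ f (Ack k (a+1) b) := by
        rw [hf.val hk hN]
        exact (big hk hkl a b).trans (ack_le hl (hf.ge hk hkl _) (hf.ge hk hkl _))
      have hfa : 0 ≤ f (a+1) := Nat.zero_le _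
      obtain ⟨z, hz⟩ := range_ack hl hfa (f b)
      rw [← hf.val hk hN, ack_zero] at hz
      set x := Ack k (a+1) b with hx
      have hq : m / x + 1 ≤ f x := by
        have : m / x ≤ m := Nat.div_le_self _ _
        rw [ack_zero] at h3
        have : k ^ x ≤ l ^ x := Nat.pow_le_pow_left hkl.le x
        omega
      calc (m / x + 1) * f x ≤ f x * f x := Nat.mul_le_mul_right _ hq
        _ = l ^ (2 * z) := by rw [hz]; ring
        _ ≤ Ack l 0 (f x) := by
          rw [ack_zero, hz]
          exact Nat.pow_le_pow_right (by omega) (two_mul_le_pow hl z)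

theorem ah_of_T (hf : IsBC k l f) (hk : 2 ≤ k) (hkl : k < l) {m : ℕ}
    (hM : ∀ m' ≤ m, Mono f m') {a b : ℕ} (hN : NFp k a b) (h1 : Ack k a b ≤ m)
    (h2 : m < Ack k a (b+1)) (hT : TT k l f m (Ack k a b)) : f m < Ack l (f a) (f b + 1) := by
  have hl : 2 ≤ l := by omega
  rcases a with _ | a
  · rw [hf.zero]; exact ah_zero hf hk hkl hM hN h1 h2
  · have hfa : f a < f (a+1) := hM (a+1) (by have := lt_ack_idx hk (a+1) b; omega) a (by omega)
    obtain ⟨a', ha'⟩ : ∃ a', f (a+1) = a' + 1 := ⟨f (a+1) - 1, by omega⟩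
    have := hT (Or.inr ⟨_, _, hN, rfl, h1, h2⟩) a k
      (hM a (by have := lt_ack_idx hk (a+1) b; omega)) (by rw [← ack_succ_succ]; exact h2)
      (h2.trans_le ((sm hk _).monotone (lt_ack hk _ _)))
    refine this.trans_le ?_
    rw [hf.val hk hN, ha', ack_succ_succ]
    refine le_trans ?_ (it_mono_n (lt_ack hl a') hkl.le _)
    exact it_le (sm hl a').monotone (fun x => ack_le hl (by omega) le_rfl) _ le_rfl

theorem T_same (hf : IsBC k l f) (hk : 2 ≤ k) (hkl : k < l) {m : ℕ}
    (hM : ∀ m' ≤ m, Mono f m') (hT : ∀ m' < m, ∀ x, TT k l f m' x) {x : ℕ}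
    (hTx : ∀ y, x < y → TT k l f m y) (hP : Pt k x m) {e : ℕ} (he1 : Ack k e x ≤ m)
    (he2 : m < Ack k (e+1) x) (j : ℕ) (hj : m < (Ack k e)^[j] x) :
    f m < (Ack l (f e))^[j] (f x) := by
  have hl : 2 ≤ l := by omega
  rcases j with _ | j
  · have := hP.le; simp at hj; omega
  rw [Function.iterate_succ_apply'] at hj ⊢
  obtain ⟨b, hxb, hN, h1, h2⟩ := hP.next hk he1 he2
  have hb := lt_ack hk e b
  have hAH := ah_of_T hf hk hkl hM hN h1 h2 (hTx _ (by omega))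
  refine hAH.trans_le ((sm hl _).monotone ?_)
  have hbj : b < (Ack k e)^[j] x := (sm hk e).lt_iff_lt.1 (by omega)
  exact hT b (by omega) x (hP.down hxb (by omega)) e j
    (hM e (by have := lt_ack_idx hk e b; omega)) hbj (by omega)

theorem idx_hi (hf : IsBC k l f) (hk : 2 ≤ k) (hkl : k < l) {m : ℕ}
    (hM : ∀ m' ≤ m, Mono f m') (hT : ∀ m' < m, ∀ x, TT k l f m' x) {x : ℕ}
    (hTx : ∀ y, x < y → TT k l f m y) (hP : Pt k x m) {e : ℕ} (he1 : Ack k e x ≤ m)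
    (he2 : m < Ack k (e+1) x) :
    f m < Ack l (f e + 1) (f x) := by
  have hl : 2 ≤ l := by omega
  have hS := T_same hf hk hkl hM hT hTx hP he1 he2
  rcases hP with rfl | ⟨a, b, hN, hx, h1, h2⟩
  · have := hS (k+1) (he2.trans_le (by
      rw [ack_succ_zero, Function.iterate_succ_apply]
      exact it_le (sm hk e).monotone (fun _ => le_rfl) _ (by
        have := lt_ack hk e 0; omega)))
    refine this.trans_le ?_
    rw [hf.zero, ack_succ_zero]
    refine (it_mono_n (lt_ack hl _) (show k + 1 ≤ l from hkl) _).trans ?_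
    exact it_le (sm hl _).monotone (fun _ => le_rfl) _ (by omega)
  · have hb := lt_ack hk a b
    have hea : e < a := by
      by_contra hh
      have := ack_le hk (show a ≤ e by omega) (show b + 1 ≤ x by omega)
      omega
    have hfe : f e < f a := hM a (by have := lt_ack_idx hk a b; omega) e hea
    have hS' := hS (k * (x+1)) (he2.trans_le (by
      rw [ack_succ_eq]
      exact it_le (sm hk e).monotone (fun _ => le_rfl) _ (by omega)))
    refine hS'.trans_le ?_
    obtain ⟨y, hy⟩ := range_ack hl (show f e + 1 ≤ f a from hfe) (f b)
    rw [← hf.val hk hN, ← hx] at hy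
    have hyl : 1 + l * (y+1) ≤ f x := by
      rw [hy, ack_succ_eq]; exact it_ge (lt_ack hl _) _ _
    have hxf := hf.ge hk hkl x
    have hcount : k * (x+1) + l * (y+1) ≤ l * (f x + 1) := by
      have e1 : k * (x+1) ≤ k * (f x + 1) := Nat.mul_le_mul_left _ (by omega)
      have e2 : k * (f x + 1) + (f x + 1) ≤ l * (f x + 1) := by
        have : (k+1) * (f x + 1) ≤ l * (f x + 1) := Nat.mul_le_mul_right _ hkl
        linarith
      omega
    conv_lhs => rw [hy]
    rw [ack_succ_eq, ← Function.iterate_add_apply, ack_succ_eq]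
    exact it_mono_n (lt_ack hl _) hcount 1

theorem T_main (hf : IsBC k l f) (hk : 2 ≤ k) (hkl : k < l) {m : ℕ}
    (hM : ∀ m' ≤ m, Mono f m') (hT : ∀ m' < m, ∀ x, TT k l f m' x) {x : ℕ}
    (hTx : ∀ y, x < y → TT k l f m y) : TT k l f m x := by
  have hl : 2 ≤ l := by omega
  intro hP d j hMd hj hd
  by_cases h0 : m < Ack k 0 x
  · have := halt_bound hf hk hkl hM hP h0
    rcases j with _ | j
    · have := hP.le; simp at hj; omega
    refine this.trans_le ((ack_le hl (Nat.zero_le (f d)) le_rfl).trans ?_)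
    exact it_mono_n (lt_ack hl (f d)) (show 1 ≤ j + 1 by omega) (f x)
  · obtain ⟨e, he1, he2⟩ := Pt.next' hk (show Ack k 0 x ≤ m by omega)
    have hed : e ≤ d := by
      by_contra hh
      have := ack_le hk (show d + 1 ≤ e by omega) (le_refl x)
      omega
    rcases hed.eq_or_lt with rfl | hed
    · exact T_same hf hk hkl hM hT hTx hP he1 he2 j hj
    · have := idx_hi hf hk hkl hM hT hTx hP he1 he2
      rcases j with _ | j
      · have := hP.le; simp at hj; omega
      have hfe : f e < f d := hMd e hed
      refine this.trans_le ((ack_le hl (show f e + 1 ≤ f d from hfe) le_rfl).trans ?_)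
      exact it_mono_n (lt_ack hl (f d)) (show 1 ≤ j + 1 by omega) (f x)

theorem mono_main (hf : IsBC k l f) (hk : 2 ≤ k) (hkl : k < l) {m : ℕ}
    (hM : ∀ m' < m, Mono f m') (hT : ∀ m' < m, ∀ x, TT k l f m' x) : Mono f m := by
  have hl : 2 ≤ l := by omega
  intro m' hm'
  obtain ⟨a, b, hN, h1, h2, h3⟩ := ex_last hk (show 0 < m by omega)
  have hb := lt_ack hk a b
  have mle : ∀ x y, x ≤ y → y < m → f x ≤ f y := by
    intro x y hxy hy
    exact mono_le (n := y) (fun z hz => hM z (by omega)) le_rfl hxy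
  have key : ∀ m' < m, m' < Ack k a b → f m' < f (Ack k a b) := by
    intro m' hm' hlt
    rw [hf.val hk hN]
    by_cases hmb : m' ≤ b
    · have := mle m' b hmb (by omega)
      have := lt_ack hl (f a) (f b)
      omega
    obtain ⟨p, hp, hPp, hpa⟩ := hN.pred hk
    have hPm : Pt k p m' := hPp.down (by omega) (by omega)
    by_cases hc : m' < Ack k a p
    · have := hT m' hm' p hPm a 1
        (hM a (by have := lt_ack_idx hk a b; omega)) hc (by omega)
      refine this.trans_le ((sm hl _).monotone (mle p b hp (by omega)))
    · obtain ⟨b', hb1, hN', hb2, hb3⟩ := hPm.next hk (show Ack k a p ≤ m' by omega) (by omega)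
      have := ah_of_T hf hk hkl (fun z hz => hM z (by omega)) hN' hb2 hb3 (hT m' hm' _)
      refine this.trans_le ((sm hl _).monotone ?_)
      have hbb : b' < b := (sm hk a).lt_iff_lt.1 (by omega)
      exact hM b (by omega) b' hbb
  obtain ⟨c, rfl⟩ := Nat.exists_eq_add_of_le h1
  have hfm := hf.nf a b c hN h2 h3
  have hv := hf.val hk hN
  by_cases hc : m' < Ack k a b
  · have := key m' hm' hc
    omega
  · obtain ⟨c', rfl⟩ := Nat.exists_eq_add_of_le (show Ack k a b ≤ m' by omega)
    rw [hfm, hf.nf a b c' hN (by omega) (by omega)]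
    have := hM c (by omega) c' (by omega)
    omega

theorem all_main (hf : IsBC k l f) (hk : 2 ≤ k) (hkl : k < l) (m : ℕ) :
    Mono f m ∧ ∀ x, TT k l f m x := by
  induction m using Nat.strong_induction_on with
  | _ m ih =>
    have h1 : Mono f m := mono_main hf hk hkl (fun m' h => (ih m' h).1) (fun m' h => (ih m' h).2)
    refine ⟨h1, ?_⟩
    have hM : ∀ m' ≤ m, Mono f m' := by
      intro m' h
      rcases h.eq_or_lt with rfl | h
      · exact h1
      · exact (ih m' h).1
    have key : ∀ n x, n = m - x → TT k l f m x := by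
      intro n
      induction n using Nat.strong_induction_on with
      | _ n ihn =>
        intro x hn
        by_cases hx : x ≤ m
        · apply T_main hf hk hkl hM (fun m' h => (ih m' h).2)
          intro y hy
          by_cases hxm : x = m
          · intro hP; have := hP.le; omega
          · exact ihn (m - y) (by omega) y rfl
        · intro hP; have := hP.le; omega
    exact fun x => key _ x rfl

end

theorem sand_aux {k m n : ℕ} {a b ms : ℕ → ℕ} (h : IsSandwich k m n a b ms) (i : ℕ)
    (hi : i ≤ n) : Pt k (ms i) m ∧ (i < n → ms i ≤ b (i+1) ∧ NFp k (a (i+1)) (b (i+1))) ∨ k < 2 := by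
  by_cases hk : 2 ≤ k
  swap
  · right; omega
  left
  induction i with
  | zero =>
    rw [h.ms_zero]
    refine ⟨Or.inl rfl, fun hi => ⟨Nat.zero_le _, NFp.base _ _ ?_⟩⟩
    have h1 := h.idx_hi 0 hi
    rw [h.ms_zero] at h1
    exact (h.arg_lo 0 hi).trans_lt h1
  | succ i ih =>
    obtain ⟨h1, h2⟩ := ih (by omega)
    obtain ⟨h2, h3⟩ := h2 (by omega)
    have hs := h.ms_succ i (by omega)
    have hP : Pt k (ms (i+1)) m :=
      Or.inr ⟨_, _, h3, hs, by rw [hs]; exact h.arg_lo i (by omega), h.arg_hi i (by omega)⟩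
    refine ⟨hP, fun hi' => ?_⟩
    have e1 := h.idx_lo (i+1) hi'
    have e2 := h.idx_hi (i+1) hi'
    have e3 := h.arg_lo (i+1) hi'
    have e4 := h.arg_hi (i+1) hi'
    have hle : ms (i+1) ≤ b (i+1+1) := by
      by_contra hh
      have := (sm hk (a (i+1+1))).monotone (show b (i+1+1) + 1 ≤ ms (i+1) by omega)
      omega
    refine ⟨hle, NFp.step (a (i+1)) (b (i+1)) _ _ h3 (hs ▸ hle) (hs ▸ (by omega)) ?_⟩
    have := h.arg_hi i (by omega)
    omega

theorem sand_spec {k m n : ℕ} {a b ms : ℕ → ℕ} (hk : 2 ≤ k) (h : IsSandwich k m n a b ms) :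
    (∀ i ≤ n, Pt k (ms i) m) ∧ (∀ i < n, ms i ≤ b (i+1)) ∧
      (∀ i < n, NFp k (a (i+1)) (b (i+1))) := by
  refine ⟨fun i hi => ?_, fun i hi => ?_, fun i hi => ?_⟩
  · rcases sand_aux h i hi with h | h
    · exact h.1
    · omega
  · rcases sand_aux h i hi.le with h | h
    · exact (h.2 hi).1
    · omega
  · rcases sand_aux h i hi.le with h | h
    · exact (h.2 hi).2
    · omega

theorem sand_ex {k : ℕ} (hk : 2 ≤ k) {a b : ℕ} (hN : NFp k a b) {m : ℕ} (h1 : Ack k a b ≤ m)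
    (h2 : m < Ack k a (b+1)) : ∃ (n : ℕ) (as bs ms : ℕ → ℕ), as (n+1) = a ∧ bs (n+1) = b ∧
      ms (n+1) = Ack k a b ∧ ms 0 = 0 ∧ ∀ i ≤ n, Ack k (as (i + 1)) (ms i) ≤ m ∧
      m < Ack k (as (i + 1) + 1) (ms i) ∧ Ack k (as (i + 1)) (bs (i + 1)) ≤ m ∧
      m < Ack k (as (i + 1)) (bs (i + 1) + 1) ∧
      ms (i + 1) = Ack k (as (i + 1)) (bs (i + 1)) := by
  induction hN with
  | base a b h =>
    refine ⟨0, fun _ => a, fun _ => b, fun i => if i = 0 then 0 else Ack k a b, rfl, rfl,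
      by simp, by simp, ?_⟩
    intro i hi
    obtain rfl : i = 0 := by omega
    refine ⟨?_, ?_, h1, h2, by simp⟩
    · simpa using ((sm hk a).monotone (Nat.zero_le b)).trans h1
    · obtain ⟨w, hw⟩ := range_ack hk (show a ≤ a + 1 by omega) 0
      rw [hw] at h
      have := (sm hk a).lt_iff_lt.1 h
      have := (sm hk a).monotone (show b + 1 ≤ w from this)
      simp only [if_true]
      omega
  | step a0 b0 a b h e1 e2 e3 ih =>
    have hb := lt_ack hk a b
    have hd := div_lem hk e1 e3
    obtain ⟨n, as, bs, ms, i1, i2, i3, i4, i5⟩ := ih (by omega) (by omega)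
    refine ⟨n+1, fun i => if i = n+2 then a else as i, fun i => if i = n+2 then b else bs i,
      fun i => if i = n+2 then Ack k a b else ms i, by simp, by simp, by simp, by simp [i4], ?_⟩
    intro i hi
    rcases hi.eq_or_lt with rfl | hi
    · have hw : Ack k a (b+1) ≤ Ack k (a+1) (Ack k a0 b0) := by
        obtain ⟨w, hw⟩ := range_ack hk (show a ≤ a + 1 by omega) (Ack k a0 b0)
        rw [hw] at e2 ⊢
        have := (sm hk a).lt_iff_lt.1 e2
        exact (sm hk a).monotone (show b + 1 ≤ w from this)
      simp only [show n + 1 + 1 = n + 2 from rfl, if_true, show ¬ (n + 1 = n + 2) by omega, if_false, i3]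
      exact ⟨((sm hk a).monotone e1).trans h1, by omega, h1, h2, trivial⟩
    · simp only [show ¬ (i + 1 = n + 2) by omega, show ¬ (i = n + 2) by omega, if_false]
      exact i5 i (by omega)

theorem NF_of {k : ℕ} (hk : 2 ≤ k) {a b c : ℕ} (hN : NFp k a b)
    (h2 : Ack k a b + c < Ack k a (b+1)) (h3 : Ack k a b + c < Ack k 0 (Ack k a b)) :
    NF k (Ack k a b + c) a b c := by
  obtain ⟨n, as, bs, ms, i1, i2, i3, i4, i5⟩ := sand_ex hk hN (Nat.le_add_right _ c) h2
  refine ⟨rfl, n+1, as, bs, ms, by omega, ?_, i1.symm, i2.symm⟩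
  exact ⟨i4, fun i hi => (i5 i (by omega)).1, fun i hi => (i5 i (by omega)).2.1,
    fun i hi => (i5 i (by omega)).2.2.1, fun i hi => (i5 i (by omega)).2.2.2.1,
    fun i hi => (i5 i (by omega)).2.2.2.2, by rw [i3]; exact h3⟩

theorem max_unique {g : ℕ → ℕ} (hg : StrictMono g) {m x y : ℕ} (h1 : g x ≤ m) (h2 : m < g (x+1))
    (h3 : g y ≤ m) (h4 : m < g (y+1)) : x = y := by
  have e1 := hg.lt_iff_lt.1 (show g x < g (y+1) by omega)
  have e2 := hg.lt_iff_lt.1 (show g y < g (x+1) by omega)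
  omega

theorem sand_unique {k m n n' : ℕ} {a b ms a' b' ms' : ℕ → ℕ} (hk : 2 ≤ k)
    (h : IsSandwich k m n a b ms) (h' : IsSandwich k m n' a' b' ms') (hn : 1 ≤ n) :
    n = n' ∧ a n = a' n ∧ b n = b' n := by
  have step : ∀ i, i < n → i < n' → ms i = ms' i → a (i+1) = a' (i+1) ∧ b (i+1) = b' (i+1) := by
    intro i hi hi' e
    have h1 := h.idx_lo i hi
    have h2 := h.idx_hi i hi
    have h3 := h'.idx_lo i hi'
    have h4 := h'.idx_hi i hi'
    rw [← e] at h3 h4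
    have ea : a (i+1) = a' (i+1) := max_unique (sma hk (ms i)) h1 h2 h3 h4
    have h5 := h.arg_lo i hi
    have h6 := h.arg_hi i hi
    have h7 := h'.arg_lo i hi'
    have h8 := h'.arg_hi i hi'
    rw [← ea] at h7 h8
    exact ⟨ea, max_unique (sm hk _) h5 h6 h7 h8⟩
  have key : ∀ i, i ≤ n → i ≤ n' → ms i = ms' i := by
    intro i
    induction i with
    | zero => intros; rw [h.ms_zero, h'.ms_zero]
    | succ i ih =>
      intro hi hi'
      obtain ⟨ea, eb⟩ := step i hi hi' (ih (by omega) (by omega))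
      rw [h.ms_succ i hi, h'.ms_succ i hi', ea, eb]
  have hnn : n = n' := by
    rcases lt_trichotomy n n' with hlt | he | hlt
    · exfalso
      have h1 := h'.idx_lo n hlt
      have h2 := h.halt
      rw [key n le_rfl hlt.le] at h2
      have := ack_le hk (Nat.zero_le (a' (n+1))) (le_refl (ms' n))
      omega
    · exact he
    · exfalso
      have h1 := h.idx_lo n' hlt
      have h2 := h'.halt
      rw [← key n' hlt.le le_rfl] at h2
      have := ack_le hk (Nat.zero_le (a (n'+1))) (le_refl (ms n'))
      omega
  subst hnn
  obtain ⟨j, rfl⟩ : ∃ j, n = j + 1 := ⟨n - 1, by omega⟩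
  exact ⟨rfl, step j (by omega) (by omega) (key j (by omega) (by omega))⟩

theorem NF.unique {k m a b c a' b' c' : ℕ} (hk : 2 ≤ k) (h : NF k m a b c)
    (h' : NF k m a' b' c') : a = a' ∧ b = b' ∧ c = c' := by
  obtain ⟨e, n, as, bs, ms, hn, hs, rfl, rfl⟩ := h
  obtain ⟨e', n', as', bs', ms', hn', hs', rfl, rfl⟩ := h'
  obtain ⟨rfl, ea, eb⟩ := sand_unique hk hs hs' hn
  refine ⟨ea, eb, ?_⟩
  rw [ea, eb] at e
  omega

theorem NF.pos {k m a b c : ℕ} (hk : 2 ≤ k) (h : NF k m a b c) : 0 < m := by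
  have := h.1
  have := lt_ack hk a b
  omega

theorem BCH.unique {k l m v v' : ℕ} (hk : 2 ≤ k) (h : BCH k l m v) (h' : BCH k l m v') :
    v = v' := by
  induction h generalizing v' with
  | zero =>
    generalize hz : (0:ℕ) = z at h'
    cases h' with
    | zero => exact hz
    | step m a b c a' b' c' hN => have := NF.pos hk hN; omega
  | step m a b c a' b' c' hN ha hb hc iha ihb ihc =>
    cases h' with
    | zero => have := NF.pos hk hN; omega
    | step m a2 b2 c2 a2' b2' c2' hN2 ha2 hb2 hc2 =>
      obtain ⟨rfl, rfl, rfl⟩ := NF.unique hk hN hN2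
      rw [iha ha2, ihb hb2, ihc hc2]

theorem BCH.ex {k l : ℕ} (hk : 2 ≤ k) (m : ℕ) : ∃ v, BCH k l m v := by
  induction m using Nat.strong_induction_on with
  | _ m ih =>
    rcases Nat.eq_zero_or_pos m with rfl | hm
    · exact ⟨0, BCH.zero⟩
    obtain ⟨a, b, hN, h1, h2, h3⟩ := ex_last hk hm
    obtain ⟨c, rfl⟩ := Nat.exists_eq_add_of_le h1
    have := lt_ack hk a b
    have := lt_ack_idx hk a b
    obtain ⟨a', ha⟩ := ih a (by omega)
    obtain ⟨b', hb⟩ := ih b (by omega)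
    obtain ⟨c', hc⟩ := ih c (by omega)
    exact ⟨_, BCH.step _ a b c a' b' c' (NF_of hk hN h2 h3) ha hb hc⟩

theorem sand_map {k l m n : ℕ} {a b ms : ℕ → ℕ} {f : ℕ → ℕ} (hf : IsBC k l f) (hk : 2 ≤ k)
    (hkl : k < l) (h : IsSandwich k m n a b ms) :
    IsSandwich l (f m) n (fun i => f (a i)) (fun i => f (b i)) (fun i => f (ms i)) := by
  have hl : 2 ≤ l := by omega
  obtain ⟨s1, s2, s3⟩ := sand_spec hk h
  have hM : ∀ m' ≤ m, Mono f m' := fun m' _ => (all_main hf hk hkl m').1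
  have hmono : ∀ x y, x ≤ y → f x ≤ f y := fun x y hxy =>
    mono_le (n := y) (fun z _ => (all_main hf hk hkl z).1) le_rfl hxy
  have hlo : ∀ i < n, Ack l (f (a (i+1))) (f (b (i+1))) ≤ f m := by
    intro i hi
    rw [← hf.val hk (s3 i hi)]
    exact hmono _ _ (h.arg_lo i hi)
  refine ⟨?_, ?_, ?_, hlo, ?_, ?_, ?_⟩
  · simp only [h.ms_zero, hf.zero]
  · intro i hi
    exact ((sm hl _).monotone (hmono _ _ (s2 i hi))).trans (hlo i hi)
  · intro i hi
    exact idx_hi hf hk hkl hM (fun m' _ => (all_main hf hk hkl m').2)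
      (fun y _ => (all_main hf hk hkl m).2 y) (s1 i hi.le) (h.idx_lo i hi) (h.idx_hi i hi)
  · intro i hi
    exact ah_of_T hf hk hkl hM (s3 i hi) (h.arg_lo i hi) (h.arg_hi i hi)
      ((all_main hf hk hkl m).2 _)
  · intro i hi
    simp only [h.ms_succ i hi]
    exact hf.val hk (s3 i hi)
  · exact halt_bound hf hk hkl hM (s1 n le_rfl) h.halt

end AckBC

theorem stmt_18 (k l m a b c a' b' c' : ℕ) (hk : 2 ≤ k) (hkl : k < l)
    (hNF : NF k m a b c)
    (hba : BCH k l a a') (hbb : BCH k l b b') (hbc : BCH k l c c') :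
    NF l (Ack l a' b' + c') a' b' c' ∧
      ∀ n aseq bseq ms, 1 ≤ n → IsSandwich k m n aseq bseq ms →
        aseq n = a → bseq n = b →
        ∃ aseq' bseq' ms' : ℕ → ℕ,
          IsSandwich l (Ack l a' b' + c') n aseq' bseq' ms' ∧
          aseq' n = a' ∧ bseq' n = b' ∧
          ∀ i, 1 ≤ i → i ≤ n →
            BCH k l (aseq i) (aseq' i) ∧ BCH k l (bseq i) (bseq' i) := by
  choose f hf using fun m => AckBC.BCH.ex (l := l) hk m
  have hu : ∀ {m v}, BCH k l m v → v = f m := fun h => AckBC.BCH.unique hk h (hf _)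
  have hbc' : AckBC.IsBC k l f := by
    refine ⟨(hu BCH.zero).symm, fun a b c hN h1 h2 => ?_⟩
    exact (hu (BCH.step _ a b c _ _ _ (AckBC.NF_of hk hN h1 h2) (hf a) (hf b) (hf c))).symm
  have hm : Ack l a' b' + c' = f m := hu (BCH.step _ a b c _ _ _ hNF hba hbb hbc)
  obtain rfl := hu hba
  obtain rfl := hu hbb
  have key : ∀ n aseq bseq ms, IsSandwich k m n aseq bseq ms →
      IsSandwich l (Ack l (f a) (f b) + c') n (fun i => f (aseq i)) (fun i => f (bseq i))
        (fun i => f (ms i)) := by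
    intro n aseq bseq ms h
    rw [hm]
    exact AckBC.sand_map hbc' hk hkl h
  refine ⟨⟨rfl, ?_⟩, ?_⟩
  · obtain ⟨_, n, as, bs, ms, hn, hs, rfl, rfl⟩ := hNF
    exact ⟨n, _, _, _, hn, key n as bs ms hs, rfl, rfl⟩
  · intro n aseq bseq ms _ hs ha hb
    exact ⟨_, _, _, key n aseq bseq ms hs, by simp only [ha], by simp only [hb],
      fun i _ _ => ⟨hf _, hf _⟩⟩
end
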